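/- For every integer r with 2 ≤ r ≤ 6, every finite simple graph (with linearly ordered vertex set) that has no K_r minor is (r−2)-acyclic. Equivalently, in the language of exterior algebraic shifting: if {r−1, r} is a face of the exterior shifting Δ^e(G), then G has a K_r minor. -/

import Mathlib

open scoped Classical

/-- The linear "rigidity-type" map of Kalai's hyperconnectivity: for `α : Fin d → V → ℝ`,
it sends `w : E(G) → ℝ` to the function `(i, x) ↦ Σ_{y ~ x, x < y} w({x,y})·α i y
− Σ_{y ~ x, y < x} w({x,y})·α i y`. -/
noncomputable def rigMap {V : Type*} [Fintype V] [LinearOrder V] (G : SimpleGraph V)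
    (d : ℕ) (α : Fin d → V → ℝ) (w : G.edgeSet → ℝ) : Fin d × V → ℝ :=
  fun p =>
    (∑ y : V, if h : G.Adj p.2 y ∧ p.2 < y then
        w ⟨s(p.2, y), G.mem_edgeSet.mpr h.1⟩ * α p.1 y else 0)
    - (∑ y : V, if h : G.Adj p.2 y ∧ y < p.2 then
        w ⟨s(p.2, y), G.mem_edgeSet.mpr h.1⟩ * α p.1 y else 0)

/-- `G` is `d`-acyclic: the set of `α` for which `rigMap G d α` is injective is open
and dense in the space of all `α : Fin d → V → ℝ` (product topology). -/
def DAcyclic {V : Type*} [Fintype V] [LinearOrder V] (G : SimpleGraph V) (d : ℕ) : Prop :=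
  IsOpen {α : Fin d → V → ℝ | Function.Injective (rigMap G d α)} ∧
  Dense {α : Fin d → V → ℝ | Function.Injective (rigMap G d α)}

/-- `H` is a minor of `G`: there is a family of pairwise disjoint nonempty connected
"branch sets" in `G`, one for each vertex of `H`, such that every edge of `H` is
realized by an edge of `G` between the corresponding branch sets. -/
def HasMinor {V W : Type*} (G : SimpleGraph V) (H : SimpleGraph W) : Prop :=
  ∃ B : W → Set V,
    (∀ i, (B i).Nonempty) ∧
    (∀ i j, i ≠ j → Disjoint (B i) (B j)) ∧
    (∀ i, (G.induce (B i)).Connected) ∧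
    (∀ i j, H.Adj i j → ∃ x ∈ B i, ∃ y ∈ B j, G.Adj x y)

/-!
Encode edge weights as antisymmetric matrices `A` supported on the edges of `G`. Then `rigMap G k α`
is `A ↦ A * αᵀ`, and `G` is `k`-acyclic as soon as a single placement `α` of its vertices in `ℝ ^ k`
makes this map injective, since injectivity is open and, along a line through such an `α`, fails
only on the spectrum of an endomorphism.

Such placements lift along the contraction of an edge with fewer than `k` common neighbours, and
they glue along cliques with at most `k` vertices. Their existence forces at most `k * (n - 1)`
edges, because `α * A * αᵀ` is antisymmetric. Hence, for `2 ≤ k`, in a minimal counterexample every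
edge lies in at least `k` triangles while the number of edges is less than `k * n`, so that some
vertex `v` has degree less than `2 * k`. Its link has minimum degree at least `k` and, as there is
no `K_{k+2}` minor, no `K_{k+1}` minor. For `k ≤ 3` no such link exists. For `k = 4` the link has at
most seven vertices, adding any edge to it creates a `K_5` minor, and one of its edges lies in at
most two triangles of the link, so that there are vertices outside `v` and its neighbours. Each
component formed by these attaches to a clique, of at most four vertices, and the graph is a clique
sum of smaller graphs.
-/

open SimpleGraph

universe u

section Minors

variable {V W U : Type*} {G : SimpleGraph V} {H : SimpleGraph W}

theorem connected_induce_iUnion (hH : H.Connected) {B : W → Set V}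
    (hB : ∀ i, (G.induce (B i)).Connected)
    (hadj : ∀ i j, H.Adj i j → ∃ x ∈ B i, ∃ y ∈ B j, G.Adj x y) :
    (G.induce (⋃ i, B i)).Connected := by
  obtain ⟨i₀⟩ := hH.nonempty
  obtain ⟨u, hu⟩ := (hB i₀).nonempty
  have hpatch (i : W) : ∃ s ⊆ ⋃ i, B i, u ∈ s ∧ B i ⊆ s ∧ (G.induce s).Connected := by
    induction (reachable_iff_reflTransGen i₀ i).1 (hH.preconnected i₀ i) with
    | refl => exact ⟨B i₀, Set.subset_iUnion B i₀, hu, subset_rfl, hB i₀⟩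
    | @tail j k _ hjk ih =>
      obtain ⟨s, hs, hus, hjs, hconn⟩ := ih
      obtain ⟨x, hx, y, hy, hxy⟩ := hadj j k hjk
      exact ⟨s ∪ B k, Set.union_subset hs (Set.subset_iUnion B k), .inl hus,
        Set.subset_union_right,
        connected_induce_union hconn.preconnected (hB k).preconnected (hjs hx) hy hxy⟩
  refine induce_connected_of_patches u (Set.mem_iUnion_of_mem i₀ hu) fun {v} hv ↦ ?_
  obtain ⟨i, hi⟩ := Set.mem_iUnion.1 hv
  obtain ⟨s, hs, hus, his, hconn⟩ := hpatch i
  exact ⟨s, hs, hus, his hi, hconn.preconnected _ _⟩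

theorem connected_induce_image_val {s : Set V} {t : Set s}
    (ht : ((G.induce s).induce t).Connected) :
    (G.induce (Subtype.val '' t)).Connected :=
  ht.map (⟨fun x ↦ ⟨x.1.1, x.1, x.2, rfl⟩, id⟩ : _ →g G.induce (Subtype.val '' t))
    (by rintro ⟨_, x, hx, rfl⟩; exact ⟨⟨x, hx⟩, rfl⟩)

theorem exists_connected_subset {s : Set V} {z : V} (hz : z ∈ s) :
    ∃ C ⊆ s, (G.induce C).Connected ∧ ∀ x ∈ C, ∀ y ∈ s, G.Adj x y → y ∈ C := by
  set c := (G.induce s).connectedComponentMk ⟨z, hz⟩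
  refine ⟨Subtype.val '' c.supp, Subtype.coe_image_subset s c.supp,
    connected_induce_image_val c.connected_toSimpleGraph, ?_⟩
  rintro _ ⟨x, hx, rfl⟩ y hy hxy
  exact ⟨⟨y, hy⟩, ConnectedComponent.mem_supp_of_adj_mem_supp c hx hxy, rfl⟩

namespace HasMinor

theorem trans {K : SimpleGraph U} (hGH : HasMinor G H) (hHK : HasMinor H K) : HasMinor G K := by
  obtain ⟨B, hne, hdisj, hconn, hadj⟩ := hGH
  obtain ⟨C, hne', hdisj', hconn', hadj'⟩ := hHK
  refine ⟨fun k ↦ ⋃ i : C k, B i, fun k ↦ ?_, fun k l hkl ↦ ?_, fun k ↦ ?_, fun k l hkl ↦ ?_⟩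
  · obtain ⟨i, hi⟩ := hne' k
    exact (hne i).mono (Set.subset_iUnion (fun i : C k ↦ B i) ⟨i, hi⟩)
  · simp only [Set.disjoint_iUnion_left, Set.disjoint_iUnion_right]
    exact fun i j ↦ hdisj _ _ (Set.disjoint_iff_forall_ne.1 (hdisj' k l hkl) j.2 i.2)
  · exact connected_induce_iUnion (hconn' k) (fun i ↦ hconn i) fun i j hij ↦ hadj i j hij
  · obtain ⟨i, hi, j, hj, hij⟩ := hadj' k l hkl
    obtain ⟨x, hx, y, hy, hxy⟩ := hadj i j hij
    exact ⟨x, Set.mem_iUnion_of_mem ⟨i, hi⟩ hx, y, Set.mem_iUnion_of_mem ⟨j, hj⟩ hy, hxy⟩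

theorem of_isContained (h : H ⊑ G) : HasMinor G H := by
  obtain ⟨f⟩ := h
  refine ⟨fun i ↦ {f i}, fun i ↦ Set.singleton_nonempty _, fun i j hij ↦ ?_, fun i ↦ ?_,
    fun i j hij ↦ ⟨_, rfl, _, rfl, f.toHom.map_adj hij⟩⟩
  · simpa using f.injective.ne hij
  · exact .of_subsingleton

theorem top_of_isClique {r : ℕ} {s : Finset V} (hs : G.IsClique s) (hr : r ≤ s.card) :
    HasMinor G (⊤ : SimpleGraph (Fin r)) :=
  of_isContained <| (not_cliqueFree_iff_top_isContained r).1 fun h ↦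
    (IsNClique.mk hs rfl).not_cliqueFree (h.mono hr)

theorem of_le {G' : SimpleGraph V} (h : HasMinor G H) (hle : G ≤ G') : HasMinor G' H :=
  (of_isContained (.of_le hle)).trans h

theorem of_induce {s : Set V} (h : HasMinor (G.induce s) H) : HasMinor G H :=
  (of_isContained ⟨Copy.induce G s⟩).trans h

theorem map_of_connected_fibers {f : V → W} (hf : ∀ w, (G.induce (f ⁻¹' {w})).Connected) :
    HasMinor G (G.map f) := by
  refine ⟨fun w ↦ f ⁻¹' {w}, fun w ↦ Set.nonempty_coe_sort.1 (hf w).nonempty,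
    fun i j hij ↦ Set.disjoint_iff_forall_ne.2 ?_, hf, fun i j hij ↦ ?_⟩
  · rintro _ rfl _ rfl rfl
    exact hij rfl
  · obtain ⟨-, x, y, hxy, hx, hy⟩ := (map_adj' f G i j).1 hij
    exact ⟨x, hx, y, hy, hxy⟩

theorem top_succ_of_dominating {r : ℕ} {B T : Set V} (hB : (G.induce B).Connected)
    (hdisj : Disjoint B T) (hdom : ∀ t ∈ T, ∃ b ∈ B, G.Adj b t)
    (h : HasMinor (G.induce T) (⊤ : SimpleGraph (Fin r))) :
    HasMinor G (⊤ : SimpleGraph (Fin (r + 1))) := by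
  obtain ⟨C, hne, hCdisj, hconn, hadj⟩ := h
  have hsub (i) : Subtype.val '' C i ⊆ T := Subtype.coe_image_subset T (C i)
  have hBC (i) : ∃ x ∈ B, ∃ y ∈ Subtype.val '' C i, G.Adj x y := by
    obtain ⟨t, ht⟩ := hne i
    obtain ⟨b, hb, hbt⟩ := hdom t t.2
    exact ⟨b, hb, t, ⟨t, ht, rfl⟩, hbt⟩
  have hCC (i j) (hij : i ≠ j) : ∃ x ∈ Subtype.val '' C i, ∃ y ∈ Subtype.val '' C j, G.Adj x y := by
    obtain ⟨x, hx, y, hy, hxy⟩ := hadj i j hij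
    exact ⟨x, ⟨x, hx, rfl⟩, y, ⟨y, hy, rfl⟩, hxy⟩
  refine ⟨Fin.cons B fun i ↦ Subtype.val '' C i, ?_, ?_, ?_, ?_⟩
  · exact Fin.cases (Set.nonempty_coe_sort.1 hB.nonempty) fun i ↦ (hne i).image _
  · refine Fin.cases (Fin.cases (absurd rfl) fun j _ ↦ hdisj.mono_right (hsub j)) fun i ↦
      Fin.cases (fun _ ↦ hdisj.symm.mono_left (hsub i)) fun j hij ↦ ?_
    exact (Set.disjoint_image_iff Subtype.val_injective).2 (hCdisj i j fun h ↦ hij (h ▸ rfl))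
  · exact Fin.cases hB fun i ↦ connected_induce_image_val (hconn i)
  · refine Fin.cases (Fin.cases (absurd rfl) fun j _ ↦ hBC j) fun i ↦
      Fin.cases (fun _ ↦ ?_) fun j hij ↦ hCC i j fun h ↦ hij (h ▸ rfl)
    obtain ⟨x, hx, y, hy, hxy⟩ := hBC i
    exact ⟨y, hy, x, hx, hxy.symm⟩

theorem top_succ_of_neighborSet {r : ℕ} {v : V}
    (h : HasMinor (G.induce (G.neighborSet v)) (⊤ : SimpleGraph (Fin r))) :
    HasMinor G (⊤ : SimpleGraph (Fin (r + 1))) :=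
  top_succ_of_dominating (B := {v}) .of_subsingleton
    (Set.disjoint_singleton_left.2 G.irrefl) (fun _ ht ↦ ⟨v, rfl, ht⟩) h

theorem induce_compl_sup_edge {C : Set V} (hC : (G.induce C).Connected) {a b c d : V}
    (ha : a ∉ C) (hc : c ∈ C) (hac : G.Adj a c) (hd : d ∈ C) (hbd : G.Adj b d) :
    HasMinor G ((G ⊔ edge a b).induce Cᶜ) := by
  have hCa : (G.induce (C ∪ {a})).Connected :=
    connected_induce_union hC.preconnected
      (Connected.of_subsingleton (G := G.induce {a})).preconnected hc rfl hac.symm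
  refine ⟨fun x ↦ if x.1 = a then C ∪ {a} else {x.1}, fun x ↦ ?_, fun x y hxy ↦ ?_, fun x ↦ ?_,
    fun x y hxy ↦ ?_⟩
  · dsimp only
    split_ifs <;> simp
  · have hx : x.1 ∉ C := x.2
    have hy : y.1 ∉ C := y.2
    have hxy' := Subtype.coe_ne_coe.2 hxy
    dsimp only
    split_ifs with hxa hya <;> simp_all [eq_comm]
  · beta_reduce
    by_cases h : x.1 = a
    · rwa [if_pos h]
    · rw [if_neg h]
      exact .of_subsingleton
  · obtain ⟨x, hx⟩ := x
    obtain ⟨y, hy⟩ := y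
    have hself (z : V) : z ∈ if z = a then C ∪ {a} else {z} := by split_ifs with h <;> simp [h]
    obtain hxy | hxy := hxy
    · exact ⟨x, hself x, y, hself y, hxy⟩
    obtain ⟨⟨rfl, rfl⟩ | ⟨rfl, rfl⟩, -⟩ := (edge_adj a b x y).1 hxy
    · exact ⟨d, by simp [hd], y, hself y, hbd.symm⟩
    · exact ⟨x, hself x, d, by simp [hd], hbd⟩

theorem top_succ_of_neighborSet_sup_edge {r : ℕ} {v : V} {C : Set V} (hC : (G.induce C).Connected)
    (hv : v ∉ C) (hdisj : Disjoint (G.neighborSet v) C) {a b : G.neighborSet v} {c d : V}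
    (hc : c ∈ C) (hac : G.Adj a c) (hd : d ∈ C) (hbd : G.Adj b d)
    (h : HasMinor (G.induce (G.neighborSet v) ⊔ edge a b) (⊤ : SimpleGraph (Fin r))) :
    HasMinor G (⊤ : SimpleGraph (Fin (r + 1))) := by
  have hnotMem {x} (hx : x ∈ G.neighborSet v) : x ∉ C := hdisj.notMem_of_mem_left hx
  refine (induce_compl_sup_edge hC (hnotMem a.2) hc hac hd hbd).trans ?_
  refine top_succ_of_neighborSet (v := ⟨v, hv⟩) (trans (of_isContained ?_) h)
  refine ⟨⟨fun x ↦ ⟨⟨x, hnotMem x.2⟩, .inl x.2⟩, fun {x y} hxy ↦ ?_⟩, fun x y hxy ↦ ?_⟩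
  · obtain hxy | hxy := hxy
    · exact .inl hxy
    · refine .inr ((edge_adj _ _ _ _).2 ?_)
      simpa [edge_adj, Subtype.ext_iff] using hxy
  · exact Subtype.ext (congrArg (fun z ↦ z.1.1) hxy)

end HasMinor

end Minors

section Counting

variable {V : Type*} {G : SimpleGraph V} {u v : V}

theorem ncard_neighborSet_induce (s : Set V) (x : s) :
    ((G.induce s).neighborSet x).ncard = (G.neighborSet x ∩ s).ncard := by
  rw [← Set.ncard_image_of_injective _ Subtype.val_injective]
  congr 1
  ext y
  simp [and_comm]

theorem ncard_neighborSet_induce_neighborSet (v : V) (x : G.neighborSet v) :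
    ((G.induce (G.neighborSet v)).neighborSet x).ncard = (G.commonNeighbors v x).ncard := by
  rw [ncard_neighborSet_induce, commonNeighbors, Set.inter_comm]

theorem ncard_neighborSet [Fintype (G.neighborSet v)] : (G.neighborSet v).ncard = G.degree v := by
  rw [Set.ncard_eq_toFinset_card', degree, neighborFinset]

theorem sum_ncard_neighborSet [Fintype V] :
    ∑ v, (G.neighborSet v).ncard = 2 * G.edgeSet.ncard := by
  rw [← coe_edgeFinset, Set.ncard_coe_finset, ← sum_degrees_eq_twice_card_edges]
  exact Finset.sum_congr rfl fun v _ ↦ ncard_neighborSet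

variable [Finite V]

theorem card_compl_singleton_add_one (v : V) :
    Nat.card ({v}ᶜ : Set V) + 1 = Nat.card V := by
  rw [Nat.card_coe_set_eq, add_comm, ← Set.ncard_singleton v, Set.ncard_add_ncard_compl]

theorem ncard_edgeSet_le_choose_two : G.edgeSet.ncard ≤ (Nat.card V).choose 2 := by
  have := Fintype.ofFinite V
  rw [← coe_edgeFinset, Set.ncard_coe_finset, Nat.card_eq_fintype_card]
  exact card_edgeFinset_le_card_choose_two

theorem exists_ncard_neighborSet_lt {c : ℕ} (h : 2 * G.edgeSet.ncard < c * Nat.card V) :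
    ∃ v, (G.neighborSet v).ncard < c := by
  have := Fintype.ofFinite V
  obtain ⟨v, -, hv⟩ := Finset.exists_lt_of_sum_lt (s := Finset.univ)
    (f := fun v ↦ (G.neighborSet v).ncard) (g := fun _ ↦ c)
    (by simpa [sum_ncard_neighborSet, mul_comm] using h)
  exact ⟨v, hv⟩

theorem ncard_neighborSet_eq_of_two_mul_ncard_edgeSet_le {c : ℕ}
    (hE : 2 * G.edgeSet.ncard ≤ c * Nat.card V) (h : ∀ v, c ≤ (G.neighborSet v).ncard) (v : V) :
    (G.neighborSet v).ncard = c := by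
  have := Fintype.ofFinite V
  refine ((Finset.sum_eq_sum_iff_of_le fun v _ ↦ h v).1 ?_ v (Finset.mem_univ v)).symm
  refine (Finset.sum_le_sum fun v _ ↦ h v).antisymm ?_
  simpa [sum_ncard_neighborSet, mul_comm] using hE

theorem ncard_edgeSet_induce_compl_singleton (v : V) :
    (G.induce {v}ᶜ).edgeSet.ncard + (G.neighborSet v).ncard = G.edgeSet.ncard := by
  have := Fintype.ofFinite V
  have h := card_edgeFinset_induce_compl_singleton G v
  rw [card_edgeFinset_deleteIncidenceSet] at h
  have hle : G.degree v ≤ G.edgeFinset.card := G.degree_le_card_edgeFinset v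
  rw [← coe_edgeFinset, ← coe_edgeFinset, Set.ncard_coe_finset, Set.ncard_coe_finset, h,
    ncard_neighborSet, Nat.sub_add_cancel hle]

theorem ncard_edgeSet_deleteEdges_singleton {e : Sym2 V} (he : e ∈ G.edgeSet) :
    (G.deleteEdges {e}).edgeSet.ncard + 1 = G.edgeSet.ncard := by
  rw [edgeSet_deleteEdges, Set.ncard_sdiff_singleton_add_one he]

theorem ncard_edgeSet_sup_edge (hne : u ≠ v) (huv : ¬ G.Adj u v) :
    (G ⊔ edge u v).edgeSet.ncard = G.edgeSet.ncard + 1 := by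
  rw [edgeSet_sup, edgeSet_edge_of_ne hne, Set.union_singleton,
    Set.ncard_insert_of_notMem (mt G.mem_edgeSet.1 huv)]

theorem mul_card_le_two_mul_ncard_edgeSet {c : ℕ} (h : ∀ v, c ≤ (G.neighborSet v).ncard) :
    c * Nat.card V ≤ 2 * G.edgeSet.ncard := by
  by_contra! hlt
  obtain ⟨v, hv⟩ := exists_ncard_neighborSet_lt hlt
  exact (h v).not_gt hv

theorem ncard_neighborSet_add_ncard_neighborSet_compl (v : V) :
    (G.neighborSet v).ncard + (Gᶜ.neighborSet v).ncard + 1 = Nat.card V := by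
  rw [← Set.ncard_union_eq (G.compl_neighborSet_disjoint v),
    G.neighborSet_union_compl_neighborSet_eq,
    ← card_compl_singleton_add_one v, Nat.card_coe_set_eq]

theorem ncard_neighborSet_lt_card (v : V) : (G.neighborSet v).ncard < Nat.card V := by
  have := ncard_neighborSet_add_ncard_neighborSet_compl (G := G) v
  omega

theorem hasMinor_top_of_card_le [Nonempty V] {k : ℕ} (hn : Nat.card V ≤ k + 1)
    (hdeg : ∀ v, k ≤ (G.neighborSet v).ncard) : HasMinor G (⊤ : SimpleGraph (Fin (k + 1))) := by
  have hcompl (v) : Gᶜ.neighborSet v = ∅ := by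
    have := ncard_neighborSet_add_ncard_neighborSet_compl (G := G) v
    rw [← Set.ncard_eq_zero]
    have := hdeg v
    omega
  obtain rfl : G = ⊤ := by
    refine compl_eq_bot.1 (eq_bot_iff_forall_not_adj.2 fun v w hvw ↦ ?_)
    exact (hcompl v).subset hvw
  have := Fintype.ofFinite V
  obtain ⟨v⟩ := ‹Nonempty V›
  have hlt := (hdeg v).trans_lt (ncard_neighborSet_lt_card v)
  refine .top_of_isClique (s := Finset.univ) (fun v _ w _ hvw ↦ hvw) ?_
  rwa [Finset.card_univ, ← Nat.card_eq_fintype_card]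

end Counting

section Contraction

variable {V : Type*} {G : SimpleGraph V} {u v : V}

/-- The map identifying `v` with `u` and fixing the other vertices: `G.map (contractMap huv)` is
the contraction of the edge `uv` of `G`. -/
noncomputable def contractMap (huv : u ≠ v) (x : V) : ({v}ᶜ : Set V) :=
  if h : x = v then ⟨u, huv⟩ else ⟨x, h⟩

theorem contractMap_eq_iff (huv : u ≠ v) {x : V} {y : ({v}ᶜ : Set V)} :
    contractMap huv x = y ↔ x = y ∨ x = v ∧ y = u := by
  obtain ⟨y, hy⟩ := y
  have hvy : v ≠ y := Ne.symm hy
  by_cases hx : x = v <;> simp [contractMap, hx, hvy, eq_comm, Subtype.ext_iff]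

theorem injOn_contractMap (huv : u ≠ v) : Set.InjOn (contractMap huv) {u}ᶜ := by
  intro x hx y hy hxy
  by_cases hyv : y = v
  · obtain hxu | ⟨hxv, -⟩ := (contractMap_eq_iff huv (y := ⟨u, huv⟩)).1
      (hxy.trans ((contractMap_eq_iff huv).2 (.inr ⟨hyv, rfl⟩)))
    exacts [absurd hxu hx, hxv.trans hyv.symm]
  · obtain hxy | ⟨-, hyu⟩ := (contractMap_eq_iff huv (y := ⟨y, hyv⟩)).1
      (hxy.trans ((contractMap_eq_iff huv).2 (.inl rfl)))
    exacts [hxy, absurd hyu hy]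

theorem contract_adj (h : G.Adj u v) {x y : ({v}ᶜ : Set V)} :
    (G.map (contractMap h.ne)).Adj x y ↔
      G.Adj x y ∨ x ≠ y ∧ (x = u ∧ G.Adj v y ∨ y = u ∧ G.Adj v x) := by
  simp only [map_adj', contractMap_eq_iff]
  constructor
  · rintro ⟨hne, x', y', hadj, rfl | ⟨rfl, hx⟩, rfl | ⟨rfl, hy⟩⟩
    · exact .inl hadj
    · exact .inr ⟨hne, .inr ⟨hy, hadj.symm⟩⟩
    · exact .inr ⟨hne, .inl ⟨hx, hadj⟩⟩
    · exact absurd hadj G.irrefl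
  · rintro (hadj | ⟨hne, ⟨hx, hadj⟩ | ⟨hy, hadj⟩⟩)
    · exact ⟨Subtype.coe_ne_coe.1 hadj.ne, x, y, hadj, .inl rfl, .inl rfl⟩
    · exact ⟨hne, v, y, hadj, .inr ⟨rfl, hx⟩, .inl rfl⟩
    · exact ⟨hne, x, v, hadj.symm, .inl rfl, .inr ⟨rfl, hy⟩⟩

theorem HasMinor.contract (h : G.Adj u v) : HasMinor G (G.map (contractMap h.ne)) := by
  refine .map_of_connected_fibers fun y ↦ ?_
  by_cases hy : y = u
  · have hfiber : contractMap h.ne ⁻¹' {y} = {u, v} := by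
      ext x; simp [contractMap_eq_iff, hy]
    rw [hfiber]
    exact induce_pair_connected_of_adj h
  · have hfiber : contractMap h.ne ⁻¹' {y} = {y.1} := by
      ext x; simp [contractMap_eq_iff, hy]
    rw [hfiber]
    exact .of_subsingleton

theorem ncard_edgeSet_contract [Finite V] (h : G.Adj u v) :
    (G.map (contractMap h.ne)).edgeSet.ncard + (G.commonNeighbors u v).ncard + 1 =
      G.edgeSet.ncard := by
  set moved : Set V := (G.neighborSet v \ G.neighborSet u) \ {u}
  have hdeg : moved.ncard + (G.commonNeighbors u v).ncard + 1 = (G.neighborSet v).ncard := by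
    have hu : u ∈ G.neighborSet v \ G.neighborSet u := ⟨h.symm, G.irrefl⟩
    rw [add_right_comm, Set.ncard_sdiff_singleton_add_one hu, commonNeighbors, Set.inter_comm,
      add_comm, Set.ncard_inter_add_ncard_sdiff_eq_ncard]
  have hle : G.induce {v}ᶜ ≤ G.map (contractMap h.ne) :=
    fun x y hxy ↦ (contract_adj h).2 (.inl hxy)
  have hmoved : moved.ncard =
      ((G.map (contractMap h.ne)).edgeSet \ (G.induce {v}ᶜ).edgeSet).ncard := by
    refine Set.ncard_congr (fun y hy ↦ s(⟨u, h.ne⟩, ⟨y, hy.1.1.ne'⟩)) ?_ ?_ ?_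
    · rintro y ⟨⟨hvy, huy⟩, hyu⟩
      exact ⟨(contract_adj h).2 (.inr ⟨Subtype.coe_ne_coe.1 (Ne.symm hyu), .inl ⟨rfl, hvy⟩⟩), huy⟩
    · intro y z _ _ hyz
      exact congrArg Subtype.val (Sym2.congr_right.1 hyz)
    · intro e
      induction e with | _ x y
      rintro ⟨hxy, hxy'⟩
      obtain hxy | ⟨hne, ⟨hx, hvy⟩ | ⟨hy, hvx⟩⟩ := (contract_adj h).1 hxy
      · exact absurd hxy hxy'
      · obtain rfl : x = ⟨u, h.ne⟩ := Subtype.ext hx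
        exact ⟨y, ⟨⟨hvy, hxy'⟩, Subtype.coe_ne_coe.2 hne.symm⟩, rfl⟩
      · obtain rfl : y = ⟨u, h.ne⟩ := Subtype.ext hy
        exact ⟨x, ⟨⟨hvx, fun hux ↦ hxy' hux.symm⟩, Subtype.coe_ne_coe.2 hne⟩, Sym2.eq_swap⟩
  have := Set.ncard_sdiff_add_ncard_of_subset (edgeSet_mono hle)
  have := ncard_edgeSet_induce_compl_singleton (G := G) v
  omega

end Contraction

theorem choose_two_add_choose_succ_two (k : ℕ) : k.choose 2 + (k + 1).choose 2 = k * k := by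
  induction k with
  | zero => rfl
  | succ k ih =>
    have h₁ := Nat.choose_succ_succ' k 1
    have h₂ := Nat.choose_succ_succ' (k + 1) 1
    simp only [Nat.choose_one_right, Nat.reduceAdd] at h₁ h₂
    linarith

section Mader

/-- The condition on `k` that drives Mader's argument for `K_{k+2}` minors: every nonempty graph of
minimum degree at least `k` on fewer than `2 * k` vertices has a `K_{k+1}` minor. It is applied to
the graph induced on the neighbours of a vertex of degree less than `2 * k`. -/
def SmallLinkCondition (k : ℕ) : Prop :=
  ∀ (V : Type u) [Finite V] [Nonempty V] (G : SimpleGraph V), Nat.card V < 2 * k →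
    (∀ v, k ≤ (G.neighborSet v).ncard) → HasMinor G (⊤ : SimpleGraph (Fin (k + 1)))

namespace SmallLinkCondition

variable {V : Type u} [Finite V] {G : SimpleGraph V} {k : ℕ}

theorem hasMinor_of_le_commonNeighbors (hk : SmallLinkCondition.{u} k)
    (hiso : ∀ v, (G.neighborSet v).Nonempty) (hE : G.edgeSet.ncard < k * Nat.card V)
    (hcm : ∀ u v, G.Adj u v → k ≤ (G.commonNeighbors u v).ncard) :
    HasMinor G (⊤ : SimpleGraph (Fin (k + 2))) := by
  obtain ⟨v, hv⟩ := exists_ncard_neighborSet_lt (G := G) (c := 2 * k) (by linarith)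
  have := (hiso v).to_subtype
  refine HasMinor.top_succ_of_neighborSet (v := v) (hk _ _ ?_ fun x ↦ ?_)
  · rwa [Nat.card_coe_set_eq]
  · rw [ncard_neighborSet_induce_neighborSet]
    exact hcm v x x.2

theorem hasMinor_of_lt_ncard_edgeSet (hk : SmallLinkCondition.{u} k) (hk2 : 2 ≤ k)
    (hn : k ≤ Nat.card V) (hE : k * Nat.card V < G.edgeSet.ncard + (k + 1).choose 2) :
    HasMinor G (⊤ : SimpleGraph (Fin (k + 2))) := by
  induction hm : Nat.card V + G.edgeSet.ncard using Nat.strong_induction_on generalizing V with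
  | _ m ih
  subst hm
  have hchoose := choose_two_add_choose_succ_two k
  have hn : k < Nat.card V := by
    refine hn.lt_of_ne fun hn ↦ ?_
    have := ncard_edgeSet_le_choose_two (G := G)
    rw [← hn] at this hE
    omega
  have hcard := card_compl_singleton_add_one (V := V)
  by_cases hsurplus : k * Nat.card V + 1 < G.edgeSet.ncard + (k + 1).choose 2
  · obtain ⟨e, he⟩ : G.edgeSet.Nonempty := by
      by_contra hempty
      rw [Set.not_nonempty_iff_eq_empty.1 hempty, Set.ncard_empty] at hE
      nlinarith
    have := ncard_edgeSet_deleteEdges_singleton he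
    exact (ih _ (by omega) hn.le (by omega) rfl).of_le (G.deleteEdges_le {e})
  by_cases hiso : ∀ v, (G.neighborSet v).Nonempty
  · by_cases hcm : ∀ u v, G.Adj u v → k ≤ (G.commonNeighbors u v).ncard
    · have : 3 ≤ (k + 1).choose 2 := Nat.choose_le_choose 2 (by omega : 3 ≤ k + 1)
      exact hk.hasMinor_of_le_commonNeighbors hiso (by omega) hcm
    · push Not at hcm
      obtain ⟨u, v, huv, hcm⟩ := hcm
      have := ncard_edgeSet_contract huv
      specialize hcard v
      have hnew : k * Nat.card ({v}ᶜ : Set V) + k = k * Nat.card V := by rw [← hcard]; ring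
      exact (HasMinor.contract huv).trans (ih _ (by omega) (by omega) (by omega) rfl)
  · push Not at hiso
    obtain ⟨v, hv⟩ := hiso
    have := ncard_edgeSet_induce_compl_singleton (G := G) v
    rw [hv, Set.ncard_empty] at this
    specialize hcard v
    have hnew : k * Nat.card ({v}ᶜ : Set V) + k = k * Nat.card V := by rw [← hcard]; ring
    exact (ih _ (by omega) (G := G.induce {v}ᶜ) (by omega) (by omega) rfl).of_induce

end SmallLinkCondition

theorem smallLinkCondition_two : SmallLinkCondition.{u} 2 := by
  intro V _ _ G hn hdeg
  exact hasMinor_top_of_card_le (k := 2) (by omega) hdeg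

theorem smallLinkCondition_three : SmallLinkCondition.{u} 3 := by
  intro V _ _ G hn hdeg
  obtain ⟨v⟩ := ‹Nonempty V›
  have hlt := (hdeg v).trans_lt (ncard_neighborSet_lt_card v)
  have hE := mul_card_le_two_mul_ncard_edgeSet hdeg
  have hchoose : Nat.choose (2 + 1) 2 = 3 := rfl
  exact smallLinkCondition_two.hasMinor_of_lt_ncard_edgeSet le_rfl (by omega) (by omega)

end Mader

section SmallGraphs

variable {V : Type u} [Finite V] {G : SimpleGraph V}

theorem hasMinor_top_four_of_card_eq_five (hn : Nat.card V = 5) {c : V}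
    (hc : (G.neighborSet c).ncard = 2) (hdeg : ∀ x ≠ c, 3 ≤ (G.neighborSet x).ncard) :
    HasMinor G (⊤ : SimpleGraph (Fin 4)) := by
  have hadj {z} (hzc : z ≠ c) (hcz : ¬ G.Adj c z) {y} (hyz : y ≠ z) (hyc : y ≠ c) : G.Adj z y := by
    by_contra hzy
    have hcard := ncard_neighborSet_add_ncard_neighborSet_compl (G := G) z
    have hle : (Gᶜ.neighborSet z).ncard ≤ 1 := by have := hdeg z hzc; omega
    exact hyc ((Set.ncard_le_one_iff (Set.toFinite _)).1 hle ⟨hyz.symm, hzy⟩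
      ⟨hzc, fun h ↦ hcz h.symm⟩)
  obtain ⟨s, t, -, hN⟩ := Set.ncard_eq_two.1 hc
  have hN (x) : G.Adj c x ↔ x = s ∨ x = t := Set.ext_iff.1 hN x
  have hcs : G.Adj c s := (hN s).2 (.inl rfl)
  refine HasMinor.top_succ_of_dominating (T := {c, s}ᶜ) (induce_pair_connected_of_adj hcs)
    disjoint_compl_right (fun z hz ↦ ?_) ?_
  · simp only [Set.mem_compl_iff, Set.mem_insert_iff, Set.mem_singleton_iff, not_or] at hz
    by_cases hcz : G.Adj c z
    · exact ⟨c, by simp, hcz⟩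
    · exact ⟨s, by simp, (hadj hz.1 hcz (Ne.symm hz.2) hcs.ne').symm⟩
  · have := Fintype.ofFinite V
    refine .top_of_isClique (s := Finset.univ) ?_ ?_
    · rintro ⟨x, hx⟩ - ⟨y, hy⟩ - hxy
      simp only [Set.mem_compl_iff, Set.mem_insert_iff, Set.mem_singleton_iff, not_or] at hx hy
      have hxy : x ≠ y := fun h ↦ hxy (Subtype.ext h)
      by_cases hcx : G.Adj c x
      · refine (hadj hy.1 (fun hcy ↦ hxy ?_) hxy hx.1).symm
        rw [((hN x).1 hcx).resolve_left hx.2, ((hN y).1 hcy).resolve_left hy.2]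
      · exact hadj hx.1 hcx hxy.symm hy.1
    · have := Set.ncard_add_ncard_compl {c, s}
      rw [Set.ncard_pair hcs.ne, hn] at this
      rw [Finset.card_univ, ← Nat.card_eq_fintype_card, Nat.card_coe_set_eq]
      omega

theorem exists_dominating_edge_of_regular (hn : Nat.card V = 7)
    (hdeg : ∀ v, (G.neighborSet v).ncard = 4) :
    ∃ x y, G.Adj x y ∧ ∀ z, G.Adj x z ∨ G.Adj y z := by
  have hcompl (v) : (Gᶜ.neighborSet v).ncard = 2 := by
    have := ncard_neighborSet_add_ncard_neighborSet_compl (G := G) v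
    rw [hdeg v] at this
    omega
  have : Nonempty V := (Nat.card_pos_iff.1 (by omega)).1
  obtain ⟨x⟩ := this
  obtain ⟨p, q, hpq, hx⟩ := Set.ncard_eq_two.1 (hcompl x)
  have hadj {a b} (hab : a ≠ b) (h : b ∉ Gᶜ.neighborSet a) : G.Adj a b := by
    by_contra hG
    exact h ⟨hab, hG⟩
  have hxp : Gᶜ.Adj x p := hx.ge (.inl rfl)
  obtain ⟨y, hy⟩ : ∃ y, y ∉ {p, q} ∪ Gᶜ.neighborSet p ∪ Gᶜ.neighborSet q := by
    by_contra! hall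
    have hcard := (Set.ncard_union_le ({p, q} ∪ Gᶜ.neighborSet p) (Gᶜ.neighborSet q)).trans
      (add_le_add_left (Set.ncard_union_le {p, q} (Gᶜ.neighborSet p)) _)
    rw [Set.eq_univ_of_forall hall, Set.ncard_univ, Set.ncard_pair hpq, hcompl, hcompl] at hcard
    omega
  simp only [Set.mem_union, not_or] at hy
  obtain ⟨⟨hyx, hyp⟩, hyq⟩ := hy
  have hxy : G.Adj x y := by
    refine hadj ?_ (hx ▸ hyx)
    rintro rfl
    exact hyp hxp.symm
  refine ⟨x, y, hxy, fun z ↦ ?_⟩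
  by_cases hz : z ∈ Gᶜ.neighborSet x
  · obtain rfl | rfl := hx.le hz
    · exact .inr (hadj (fun h ↦ hyx (.inl h.symm)) hyp).symm
    · exact .inr (hadj (fun h ↦ hyx (.inr h.symm)) hyq).symm
  · obtain rfl | hzx := eq_or_ne x z
    · exact .inr hxy.symm
    · exact .inl (hadj hzx hz)

theorem hasMinor_top_five_of_regular (hn : Nat.card V = 7)
    (hdeg : ∀ v, (G.neighborSet v).ncard = 4) : HasMinor G (⊤ : SimpleGraph (Fin 5)) := by
  obtain ⟨x, y, hxy, hdom⟩ := exists_dominating_edge_of_regular hn hdeg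
  obtain ⟨c, hc⟩ : ∃ c, G.commonNeighbors x y = {c} := by
    have hunion : G.neighborSet x ∪ G.neighborSet y = Set.univ := Set.eq_univ_of_forall hdom
    have := Set.ncard_union_add_ncard_inter (G.neighborSet x) (G.neighborSet y)
    rw [hunion, Set.ncard_univ, hdeg, hdeg] at this
    refine Set.ncard_eq_one.1 ?_
    rw [commonNeighbors]
    omega
  have hcxy : G.Adj x c ∧ G.Adj y c := hc.ge rfl
  have hdeg' (z : ({x, y}ᶜ : Set V)) :
      ((G.induce {x, y}ᶜ).neighborSet z).ncard = (G.neighborSet z \ {x, y}).ncard := by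
    rw [ncard_neighborSet_induce, Set.sdiff_eq]
  refine HasMinor.top_succ_of_dominating (T := {x, y}ᶜ) (induce_pair_connected_of_adj hxy)
    disjoint_compl_right (fun z _ ↦ by simpa using hdom z) ?_
  have hcmem : c ∈ ({x, y}ᶜ : Set V) := by simp [hcxy.1.ne', hcxy.2.ne']
  refine hasMinor_top_four_of_card_eq_five (c := ⟨c, hcmem⟩) ?_ ?_ fun z hz ↦ ?_
  · have := Set.ncard_add_ncard_compl {x, y}
    rw [Set.ncard_pair hxy.ne, hn] at this
    rw [Nat.card_coe_set_eq]
    omega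
  · have hsub : {x, y} ⊆ G.neighborSet c := Set.pair_subset hcxy.1.symm hcxy.2.symm
    rw [hdeg', Set.ncard_sdiff hsub, hdeg, Set.ncard_pair hxy.ne]
  · have hz : ¬ (G.Adj z x ∧ G.Adj z y) := fun h ↦
      hz (Subtype.ext (hc.le ⟨h.1.symm, h.2.symm⟩))
    have hle : (G.neighborSet z ∩ {x, y}).ncard ≤ 1 := by
      rw [Set.ncard_le_one_iff (Set.toFinite _)]
      rintro a b ⟨ha, rfl | rfl⟩ ⟨hb, rfl | rfl⟩
      exacts [rfl, (hz ⟨ha, hb⟩).elim, (hz ⟨hb, ha⟩).elim, rfl]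
    have := Set.ncard_inter_add_ncard_sdiff_eq_ncard (G.neighborSet z) {x, y}
    rw [hdeg] at this
    rw [hdeg']
    omega

theorem hasMinor_top_five_sup_edge (hn : Nat.card V ≤ 7) (hdeg : ∀ v, 4 ≤ (G.neighborSet v).ncard)
    (hfree : ¬ HasMinor G (⊤ : SimpleGraph (Fin 5))) {a b : V} (hne : a ≠ b) (hab : ¬ G.Adj a b) :
    HasMinor (G ⊔ edge a b) (⊤ : SimpleGraph (Fin 5)) := by
  have hlt := (hdeg a).trans_lt (ncard_neighborSet_lt_card a)
  have hE := mul_card_le_two_mul_ncard_edgeSet hdeg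
  have hE' := ncard_edgeSet_sup_edge hne hab
  have hirreg : ¬ (Nat.card V = 7 ∧ G.edgeSet.ncard = 14) := fun h ↦
    hfree <| hasMinor_top_five_of_regular h.1 <|
      ncard_neighborSet_eq_of_two_mul_ncard_edgeSet_le (by omega) hdeg
  have hchoose : Nat.choose (3 + 1) 2 = 6 := rfl
  exact smallLinkCondition_three.hasMinor_of_lt_ncard_edgeSet (by omega) (by omega) (by omega)

theorem exists_adj_ncard_commonNeighbors_le_two [Nonempty V]
    (hdeg : ∀ v, 4 ≤ (G.neighborSet v).ncard) (hfree : ¬ HasMinor G (⊤ : SimpleGraph (Fin 5))) :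
    ∃ x y, G.Adj x y ∧ (G.commonNeighbors x y).ncard ≤ 2 := by
  by_contra! hcm
  obtain ⟨v⟩ := ‹Nonempty V›
  have hlt := (hdeg v).trans_lt (ncard_neighborSet_lt_card v)
  have hiso (v) : (G.neighborSet v).Nonempty :=
    Set.nonempty_of_ncard_ne_zero (by have := hdeg v; omega)
  refine hfree (smallLinkCondition_three.hasMinor_of_lt_ncard_edgeSet (by omega) (by omega) ?_)
  by_contra hE
  refine hfree (smallLinkCondition_three.hasMinor_of_le_commonNeighbors hiso ?_ hcm)
  have hchoose : Nat.choose (3 + 1) 2 = 6 := rfl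
  omega

theorem exists_notMem_insert_neighborSet (hfree : ¬ HasMinor G (⊤ : SimpleGraph (Fin 6)))
    (hcm : ∀ x y, G.Adj x y → 4 ≤ (G.commonNeighbors x y).ncard) {v : V}
    (hiso : (G.neighborSet v).Nonempty) : ∃ z, z ∉ insert v (G.neighborSet v) := by
  by_contra! hall
  have := hiso.to_subtype
  obtain ⟨x, y, hxy, hle⟩ := exists_adj_ncard_commonNeighbors_le_two
    (G := G.induce (G.neighborSet v))
    (fun x ↦ by rw [ncard_neighborSet_induce_neighborSet]; exact hcm v x x.2)
    fun h ↦ hfree (.top_succ_of_neighborSet h)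
  have hsub : G.commonNeighbors x y ⊆
      insert v (Subtype.val '' (G.induce (G.neighborSet v)).commonNeighbors x y) := by
    intro w hw
    obtain rfl | hwN := hall w
    · exact .inl rfl
    · exact .inr ⟨⟨w, hwN⟩, hw, rfl⟩
  have hle' := (Set.ncard_le_ncard hsub).trans (Set.ncard_insert_le _ _)
  rw [Set.ncard_image_of_injective _ Subtype.val_injective] at hle'
  have := hcm x y hxy
  omega

theorem ncard_le_of_isClique_of_subset_neighborSet {k : ℕ}
    (hfree : ¬ HasMinor G (⊤ : SimpleGraph (Fin (k + 2)))) {K : Set V} (hK : G.IsClique K) {v : V}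
    (hKv : K ⊆ G.neighborSet v) : K.ncard ≤ k := by
  by_contra! hcard
  have hclique : G.IsClique (insert v K) := hK.insert fun b hb _ ↦ hKv hb
  refine hfree (.top_of_isClique (s := (Set.toFinite (insert v K)).toFinset)
    (by simpa using hclique) ?_)
  rw [← Set.ncard_eq_toFinset_card, Set.ncard_insert_of_notMem fun h ↦ G.irrefl (hKv h)]
  omega

theorem exists_separating_clique (hfree : ¬ HasMinor G (⊤ : SimpleGraph (Fin 6)))
    (hcm : ∀ x y, G.Adj x y → 4 ≤ (G.commonNeighbors x y).ncard) {v : V}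
    (hiso : (G.neighborSet v).Nonempty) (hdeg : (G.neighborSet v).ncard ≤ 7) :
    ∃ C K : Set V, C.Nonempty ∧ v ∉ C ∧ v ∉ K ∧ G.IsClique K ∧ K.ncard ≤ 4 ∧
      ∀ x ∈ C, ∀ y, G.Adj x y → y ∈ C ∪ K := by
  set N := G.neighborSet v
  obtain ⟨z, hz⟩ := exists_notMem_insert_neighborSet hfree hcm hiso
  obtain ⟨C, hCsub, hC, hCclosed⟩ := exists_connected_subset (G := G) (s := (insert v N)ᶜ) hz
  have hvC : v ∉ C := fun h ↦ hCsub h (.inl rfl)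
  have hNC : Disjoint N C := Set.disjoint_left.2 fun x hx hxC ↦ hCsub hxC (.inr hx)
  set K : Set V := {a ∈ N | ∃ c ∈ C, G.Adj a c}
  have hK : G.IsClique K := by
    rintro a ⟨haN, c, hc, hac⟩ b ⟨hbN, d, hd, hbd⟩ hne
    by_contra hab
    have hminor := hasMinor_top_five_sup_edge (by rwa [Nat.card_coe_set_eq])
      (fun x ↦ by rw [ncard_neighborSet_induce_neighborSet]; exact hcm v x x.2)
      (fun h ↦ hfree (.top_succ_of_neighborSet h))
      (a := ⟨a, haN⟩) (b := ⟨b, hbN⟩) (Subtype.coe_ne_coe.1 hne) hab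
    exact hfree (.top_succ_of_neighborSet_sup_edge hC hvC hNC hc hac hd hbd hminor)
  refine ⟨C, K, Set.nonempty_coe_sort.1 hC.nonempty, hvC, fun h ↦ G.irrefl h.1, hK,
    ncard_le_of_isClique_of_subset_neighborSet hfree hK (Set.sep_subset _ _), fun x hx y hxy ↦ ?_⟩
  by_cases hy : y ∈ insert v N
  · obtain rfl | hyN := hy
    · exact (hNC.notMem_of_mem_left hxy.symm hx).elim
    · exact .inr ⟨hyN, x, hx, hxy.symm⟩
  · exact .inl (hCclosed x hx y hy hxy)

end SmallGraphs

section Generic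

variable {E F H : Type*} [AddCommGroup E] [Module ℝ E] [TopologicalSpace E]
  [IsTopologicalAddGroup E] [ContinuousSMul ℝ E] [AddCommGroup F] [Module ℝ F]
  [FiniteDimensional ℝ F] [AddCommGroup H] [Module ℝ H]

theorem isOpen_setOf_injective [T2Space E] [FiniteDimensional ℝ E] (L : E →ₗ[ℝ] F →ₗ[ℝ] H) :
    IsOpen {a | Function.Injective (L a)} := by
  refine isOpen_iff_mem_nhds.2 fun a ha ↦ ?_
  obtain ⟨g, hg⟩ := (L a).exists_leftInverse_of_injective (LinearMap.ker_eq_bot.2 ha)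
  let b := Module.finBasis ℝ F
  have hcont : Continuous fun a ↦ LinearMap.det (g ∘ₗ L a) := by
    have := ((LinearMap.toMatrix b b).toLinearMap ∘ₗ
      LinearMap.compRight ℝ g ∘ₗ L).continuous_of_finiteDimensional.matrix_det
    exact this.congr fun a ↦ LinearMap.det_toMatrix b _
  have hdet : LinearMap.det (g ∘ₗ L a) ≠ 0 := by rw [hg, LinearMap.det_id]; exact one_ne_zero
  filter_upwards [hcont.continuousAt.eventually_ne hdet] with x hx
  have hunit := (LinearMap.isUnit_iff_isUnit_det (g ∘ₗ L x)).2 (isUnit_iff_ne_zero.2 hx)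
  exact .of_comp ((Module.End.isUnit_iff _).1 hunit).1

theorem dense_setOf_injective (L : E →ₗ[ℝ] F →ₗ[ℝ] H) {a₀ : E}
    (h₀ : Function.Injective (L a₀)) : Dense {a | Function.Injective (L a)} := by
  intro a
  obtain ⟨g, hg⟩ := (L a₀).exists_leftInverse_of_injective (LinearMap.ker_eq_bot.2 h₀)
  let M : Module.End ℝ F := g ∘ₗ L a
  have hinj {t : ℝ} (ht : t ∉ spectrum ℝ M) : Function.Injective (L (a - t • a₀)) := by
    have hunit : IsUnit (M - algebraMap ℝ _ t) := by
      rw [← neg_sub, IsUnit.neg_iff]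
      exact spectrum.notMem_iff.1 ht
    have hM : M - algebraMap ℝ _ t = g ∘ₗ L (a - t • a₀) := by
      rw [map_sub, map_smul, LinearMap.comp_sub, LinearMap.comp_smul, hg]
      rfl
    rw [hM] at hunit
    exact .of_comp ((Module.End.isUnit_iff _).1 hunit).1
  have hcont : Continuous fun t : ℝ ↦ a - t • a₀ := by fun_prop
  simpa using map_mem_closure hcont
    (M.finite_spectrum.countable.dense_compl ℝ 0) fun t ht ↦ hinj ht

end Generic

section Stress

open Matrix

variable {V : Type*} {d : ℕ}

/-- The real antisymmetric matrices supported on the edges of `G`. They encode the edge weights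
`w` of `rigMap`, the entry at `(x, y)` with `x < y` being `w {x, y}`, without reference to the order
on the vertices. -/
def skewMatrices (G : SimpleGraph V) : Submodule ℝ (Matrix V V ℝ) where
  carrier := {A | Aᵀ = -A ∧ ∀ x y, ¬ G.Adj x y → A x y = 0}
  add_mem' {A B} hA hB := ⟨by rw [transpose_add, hA.1, hB.1, neg_add],
    fun x y h ↦ by rw [Matrix.add_apply, hA.2 x y h, hB.2 x y h, add_zero]⟩
  zero_mem' := ⟨by simp, fun _ _ _ ↦ rfl⟩
  smul_mem' c A hA := ⟨by rw [transpose_smul, hA.1, smul_neg],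
    fun x y h ↦ by rw [Matrix.smul_apply, hA.2 x y h, smul_zero]⟩

theorem dense_setOf_linearIndepOn_col [Finite V] {K : Set V} (hK : K.ncard ≤ d) :
    Dense {α : Matrix (Fin d) V ℝ | LinearIndepOn ℝ α.col K} := by
  have := Fintype.ofFinite V
  let L : Matrix (Fin d) V ℝ →ₗ[ℝ] (K → ℝ) →ₗ[ℝ] Fin d → ℝ :=
    LinearMap.mk₂ ℝ (fun α c ↦ α.submatrix id Subtype.val *ᵥ c)
      (fun _ _ _ ↦ add_mulVec _ _ _)
      (fun _ _ _ ↦ by rw [submatrix_smul, Pi.smul_apply, Pi.smul_apply, smul_mulVec])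
      (fun _ _ _ ↦ mulVec_add _ _ _) (fun _ _ _ ↦ mulVec_smul _ _ _)
  have hL (α) : LinearIndepOn ℝ α.col K ↔ Function.Injective (L α) := mulVec_injective_iff.symm
  obtain ⟨e⟩ : Nonempty (K ↪ Fin d) := Function.Embedding.nonempty_of_card_le
    (by rwa [Fintype.card_fin, ← Nat.card_eq_fintype_card, Nat.card_coe_set_eq])
  let α₀ : Matrix (Fin d) V ℝ :=
    (of fun x ↦ if h : x ∈ K then Pi.single (e ⟨x, h⟩) 1 else 0)ᵀ
  have hα₀ : LinearIndepOn ℝ α₀.col K := by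
    have hcol : (fun x : K ↦ α₀.col x) = Pi.basisFun ℝ (Fin d) ∘ e := by
      ext x i
      simp [α₀, col]
    rw [LinearIndepOn, hcol]
    exact (Pi.basisFun ℝ (Fin d)).linearIndependent.comp e e.injective
  simpa only [hL] using dense_setOf_injective L ((hL _).1 hα₀)

variable [Fintype V] {G : SimpleGraph V} {α : Matrix (Fin d) V ℝ}

/-- The map `rigMap` in terms of antisymmetric matrices. -/
def stressMap (G : SimpleGraph V) (d : ℕ) :
    Matrix (Fin d) V ℝ →ₗ[ℝ] skewMatrices G →ₗ[ℝ] Matrix V (Fin d) ℝ :=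
  LinearMap.mk₂ ℝ (fun α A ↦ A.1 * αᵀ) (fun _ _ _ ↦ by rw [transpose_add, Matrix.mul_add])
    (fun _ _ _ ↦ by rw [transpose_smul, Matrix.mul_smul]) (fun _ _ _ ↦ Matrix.add_mul _ _ _)
    (fun _ _ _ ↦ Matrix.smul_mul _ _ _)

/-- The placement `α` of the vertices of `G` in `ℝ ^ d`, one column per vertex, admits no nonzero
stress: a weighting of the edges in antisymmetric form under which the weighted sum of the
neighbours vanishes at every vertex. -/
def IsStressFree (G : SimpleGraph V) (α : Matrix (Fin d) V ℝ) : Prop :=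
  ∀ A ∈ skewMatrices G, A * αᵀ = 0 → A = 0

/-- Some, equivalently almost every, placement of `G` in `ℝ ^ d` is stress free. -/
def GenericallyStressFree (G : SimpleGraph V) (d : ℕ) : Prop :=
  ∃ α : Matrix (Fin d) V ℝ, IsStressFree G α

theorem isStressFree_iff_injective : IsStressFree G α ↔ Function.Injective (stressMap G d α) := by
  rw [injective_iff_map_eq_zero]
  exact ⟨fun h A hA ↦ Subtype.ext (h A A.2 hA), fun h A hA h0 ↦ congrArg Subtype.val (h ⟨A, hA⟩ h0)⟩

theorem isOpen_setOf_isStressFree (G : SimpleGraph V) (d : ℕ) :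
    IsOpen {α : Matrix (Fin d) V ℝ | IsStressFree G α} := by
  simpa only [isStressFree_iff_injective] using isOpen_setOf_injective (stressMap G d)

theorem GenericallyStressFree.dense (h : GenericallyStressFree G d) :
    Dense {α : Matrix (Fin d) V ℝ | IsStressFree G α} := by
  obtain ⟨α, hα⟩ := h
  simpa only [isStressFree_iff_injective] using
    dense_setOf_injective (stressMap G d) (isStressFree_iff_injective.1 hα)

theorem eq_zero_of_linearIndepOn_col {K : Set V} (hα : LinearIndepOn ℝ α.col K) {c : V → ℝ}
    (hc : ∀ x ∉ K, c x = 0) (h : α *ᵥ c = 0) : c = 0 := by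
  have hsum : ∑ x : K, c x • α.col x = 0 := by
    rw [← h, mulVec_eq_sum]
    refine Finset.sum_of_injOn Subtype.val Subtype.val_injective.injOn (by simp) ?_ ?_
    · intro x _ hx
      rw [hc x fun hxK ↦ hx ⟨⟨x, hxK⟩, by simp⟩]
      simp
    · intro x _
      simp [col]
  funext x
  by_cases hx : x ∈ K
  · exact Fintype.linearIndependent_iff.1 hα (fun x ↦ c x) hsum ⟨x, hx⟩
  · exact hc x hx

theorem GenericallyStressFree.exists_isStressFree_linearIndepOn_col (h : GenericallyStressFree G d)
    {K : Set V} (hK : K.ncard ≤ d) :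
    ∃ α : Matrix (Fin d) V ℝ, IsStressFree G α ∧ LinearIndepOn ℝ α.col K :=
  (h.dense.inter_of_isOpen_left (dense_setOf_linearIndepOn_col hK)
    (isOpen_setOf_isStressFree G d)).nonempty

end Stress

section StressOperations

open Matrix

variable {V W : Type*} {G : SimpleGraph V} {d : ℕ}

theorem apply_eq_neg_of_mem_skewMatrices {A : Matrix V V ℝ} (hA : A ∈ skewMatrices G) (x y : V) :
    A x y = -A y x :=
  congrFun₂ hA.1 y x

theorem mem_skewMatrices_of_isClique {K : Set V} (hK : G.IsClique K) {B : Matrix V V ℝ}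
    (hB : Bᵀ = -B) (hBK : ∀ x ∉ K, B x = 0) : B ∈ skewMatrices G := by
  refine ⟨hB, fun x y hxy ↦ ?_⟩
  have hyx : B x y = -B y x := congrFun₂ hB y x
  by_cases hx : x ∈ K
  · by_cases hy : y ∈ K
    · obtain rfl : x = y := by_contra fun hne ↦ hxy (hK hx hy hne)
      exact self_eq_neg.1 hyx
    · rw [hyx, hBK y hy, Pi.zero_apply, neg_zero]
  · rw [hBK x hx, Pi.zero_apply]

theorem skewMatrices_sup_le (G₁ G₂ : SimpleGraph V) :
    skewMatrices (G₁ ⊔ G₂) ≤ skewMatrices G₁ ⊔ skewMatrices G₂ := by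
  intro A hA
  let A₁ : Matrix V V ℝ := of fun x y ↦ if G₁.Adj x y then A x y else 0
  have hA₁ : A₁ ∈ skewMatrices G₁ := by
    refine ⟨?_, fun x y hxy ↦ if_neg hxy⟩
    ext x y
    by_cases hxy : G₁.Adj x y
    · simp [A₁, hxy, hxy.symm, apply_eq_neg_of_mem_skewMatrices hA y x]
    · simp [A₁, hxy, G₁.adj_comm y x]
  have hA₂ : A - A₁ ∈ skewMatrices G₂ := by
    refine ⟨by rw [transpose_sub, hA.1, hA₁.1]; abel, fun x y hxy ↦ ?_⟩
    by_cases h₁ : G₁.Adj x y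
    · simp [A₁, h₁]
    · simp [A₁, h₁, hA.2 x y (by simp [h₁, hxy])]
  exact Submodule.mem_sup.2 ⟨A₁, hA₁, A - A₁, hA₂, add_sub_cancel A₁ A⟩

variable [Fintype V] [Fintype W]

theorem mul_apply_eq_zero_of_notMem_support {A : Matrix V V ℝ} (hA : A ∈ skewMatrices G) {x : V}
    (hx : x ∉ G.support) {ι : Type*} (M : Matrix V ι ℝ) : (A * M) x = 0 := by
  have hAx : A x = 0 := funext fun y ↦ hA.2 x y fun hxy ↦ hx ⟨y, hxy⟩
  rw [mul_apply_eq_vecMul, hAx, zero_vecMul]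

theorem transpose_mul_mul_transpose_of_mem_skewMatrices {A : Matrix V V ℝ}
    (hA : A ∈ skewMatrices G) (α : Matrix (Fin d) V ℝ) :
    (α * (A * αᵀ))ᵀ = -(α * (A * αᵀ)) := by
  simp [transpose_mul, hA.1, Matrix.mul_assoc]

theorem genericallyStressFree_bot : GenericallyStressFree (⊥ : SimpleGraph V) d :=
  ⟨0, fun _ hA _ ↦ Matrix.ext fun x y ↦ hA.2 x y not_false⟩

theorem GenericallyStressFree.map (f : V ↪ W) (h : GenericallyStressFree G d) :
    GenericallyStressFree (G.map f) d := by
  obtain ⟨α, hα⟩ := h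
  refine ⟨of fun i ↦ Function.extend f (α i) 0, fun A hA h ↦ ?_⟩
  have hrange {w} (hw : w ∉ Set.range f) (w') : A w w' = 0 :=
    hA.2 w w' fun ⟨_, x, _, _, hx, _⟩ ↦ hw ⟨x, hx⟩
  have hsub : A.submatrix f f = 0 := by
    refine hα _ ⟨?_, fun x y hxy ↦ hA.2 _ _ (by simpa using hxy)⟩ ?_
    · rw [transpose_submatrix, hA.1]
      rfl
    · ext x i
      refine .trans ?_ (congrFun₂ h (f x) i)
      rw [mul_apply, mul_apply]
      refine Finset.sum_of_injOn f f.injective.injOn (by simp) (fun w _ hw ↦ ?_) (fun y _ ↦ ?_)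
      · rw [apply_eq_neg_of_mem_skewMatrices hA, hrange (by simpa using hw)]
        simp
      · simp [f.injective.extend_apply]
  ext w w'
  by_cases hw : w ∈ Set.range f
  · by_cases hw' : w' ∈ Set.range f
    · obtain ⟨x, rfl⟩ := hw
      obtain ⟨y, rfl⟩ := hw'
      exact congrFun₂ hsub x y
    · rw [apply_eq_neg_of_mem_skewMatrices hA, hrange hw', neg_zero, Matrix.zero_apply]
  · exact hrange hw w'

theorem IsStressFree.sum_fibers_eq_zero [DecidableEq W] {f : V → W} {α : Matrix (Fin d) W ℝ}
    (hα : IsStressFree (G.map f) α) {A : Matrix V V ℝ} (hA : A ∈ skewMatrices G)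
    (h : A * (α.submatrix id f)ᵀ = 0) (w w' : W) :
    ∑ x with f x = w, ∑ y with f y = w', A x y = 0 := by
  let P : Matrix V W ℝ := (1 : Matrix W W ℝ).submatrix f id
  have hP (w w') : (Pᵀ * A * P) w w' = ∑ x with f x = w, ∑ y with f y = w', A x y := by
    simp only [P, mul_apply, transpose_apply, submatrix_apply, one_apply, id_eq, mul_ite, mul_one,
      mul_zero, ite_mul, one_mul, zero_mul, ← Finset.sum_filter]
    exact Finset.sum_comm
  have hskew : (Pᵀ * A * P)ᵀ = -(Pᵀ * A * P) := by
    simp [transpose_mul, hA.1, Matrix.mul_assoc]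
  rw [← hP]
  refine congrFun₂ (hα (Pᵀ * A * P) ⟨hskew, fun a b hab ↦ ?_⟩ ?_) w w'
  · obtain rfl | hne := eq_or_ne a b
    · exact self_eq_neg.1 (congrFun₂ hskew a a)
    · rw [hP]
      refine Finset.sum_eq_zero fun x hx ↦ Finset.sum_eq_zero fun y hy ↦ hA.2 x y fun hxy ↦ hab ?_
      obtain rfl := (Finset.mem_filter.1 hx).2
      obtain rfl := (Finset.mem_filter.1 hy).2
      exact map_adj_apply' hxy hne
  · have : P * αᵀ = (α.submatrix id f)ᵀ := by
      ext x i
      simp [P, mul_apply, one_apply]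
    rw [Matrix.mul_assoc, this, Matrix.mul_assoc, h, Matrix.mul_zero]

section Contract

variable {u v : V} {huv : u ≠ v} {α : Matrix (Fin d) ({v}ᶜ : Set V) ℝ} {A : Matrix V V ℝ}

theorem filter_contractMap_eq_singleton {x : V} (hxu : x ≠ u) (hxv : x ≠ v) :
    ({a | contractMap huv a = ⟨x, hxv⟩} : Finset V) = {x} := by
  ext a
  simp [contractMap_eq_iff, hxu]

theorem filter_contractMap_eq_pair : ({a | contractMap huv a = ⟨u, huv⟩} : Finset V) = {u, v} := by
  ext a
  simp [contractMap_eq_iff]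

theorem IsStressFree.apply_eq_zero_of_contract (hα : IsStressFree (G.map (contractMap huv)) α)
    (hA : A ∈ skewMatrices G) (h : A * (α.submatrix id (contractMap huv))ᵀ = 0) {x y : V}
    (hxu : x ≠ u) (hxv : x ≠ v) (hyu : y ≠ u) (hyv : y ≠ v) : A x y = 0 := by
  simpa [filter_contractMap_eq_singleton, hxu, hyu] using
    hα.sum_fibers_eq_zero hA h ⟨x, hxv⟩ ⟨y, hyv⟩

theorem IsStressFree.apply_add_apply_eq_zero_of_contract
    (hα : IsStressFree (G.map (contractMap huv)) α) (hA : A ∈ skewMatrices G)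
    (h : A * (α.submatrix id (contractMap huv))ᵀ = 0) {y : V} (hyu : y ≠ u) (hyv : y ≠ v) :
    A u y + A v y = 0 := by
  simpa [filter_contractMap_eq_singleton, filter_contractMap_eq_pair, hyu,
    Finset.sum_pair huv] using
    hα.sum_fibers_eq_zero hA h ⟨u, huv⟩ ⟨y, hyv⟩

end Contract

theorem genericallyStressFree_of_contract {u v : V} (huv : G.Adj u v)
    (h : GenericallyStressFree (G.map (contractMap huv.ne)) d)
    (hcm : (G.commonNeighbors u v).ncard + 1 ≤ d) : GenericallyStressFree G d := by
  set f := contractMap huv.ne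
  set K : Set V := insert v (G.commonNeighbors u v)
  have hcard : (f '' K).ncard ≤ d :=
    (Set.ncard_image_le).trans ((Set.ncard_insert_le _ _).trans hcm)
  have hinj : Set.InjOn f K := by
    refine (injOn_contractMap huv.ne).mono ?_
    rintro x (rfl | hx)
    exacts [huv.ne', hx.1.ne']
  obtain ⟨α, hα, hK⟩ := h.exists_isStressFree_linearIndepOn_col hcard
  refine ⟨α.submatrix id f, fun A hA h ↦ ?_⟩
  have hu : A u = 0 := by
    refine eq_zero_of_linearIndepOn_col (hK.comp_of_image hinj) (fun y hy ↦ ?_) ?_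
    · by_cases huy : G.Adj u y
      · have hvy : ¬ G.Adj v y := fun hvy ↦ hy (.inr ⟨huy, hvy⟩)
        have := hα.apply_add_apply_eq_zero_of_contract hA h huy.ne' fun hyv ↦ hy (.inl hyv)
        rwa [hA.2 v y hvy, add_zero] at this
      · exact hA.2 u y huy
    · exact (vecMul_transpose _ _).symm.trans (congrFun h u)
  have hv : A v = 0 := by
    funext y
    obtain rfl | hyu := eq_or_ne y u
    · rw [apply_eq_neg_of_mem_skewMatrices hA, hu, Pi.zero_apply, Pi.zero_apply, neg_zero]
    obtain rfl | hyv := eq_or_ne y v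
    · exact hA.2 y y G.irrefl
    · simpa [hu] using hα.apply_add_apply_eq_zero_of_contract hA h hyu hyv
  have hrow {x} (hx : x = u ∨ x = v) : A x = 0 := by obtain rfl | rfl := hx <;> assumption
  ext x y
  by_cases hx : x = u ∨ x = v
  · exact congrFun (hrow hx) y
  by_cases hy : y = u ∨ y = v
  · rw [apply_eq_neg_of_mem_skewMatrices hA, hrow hy, Pi.zero_apply, neg_zero, Matrix.zero_apply]
  push Not at hx hy
  exact hα.apply_eq_zero_of_contract hA h hx.1 hx.2 hy.1 hy.2

theorem exists_mul_mul_eq_of_linearIndepOn_col {α : Matrix (Fin d) V ℝ} {K : Set V}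
    (hK : LinearIndepOn ℝ α.col K) :
    ∃ γ : Matrix V (Fin d) ℝ, ∀ F : Matrix V (Fin d) ℝ, (∀ x ∉ K, F x = 0) → γ * (α * F) = F := by
  let S : Submodule ℝ (V → ℝ) := Submodule.pi Kᶜ fun _ ↦ ⊥
  obtain ⟨g, hg⟩ := (α.mulVecLin ∘ₗ S.subtype).exists_leftInverse_of_injective <|
    LinearMap.ker_eq_bot'.2 fun c hc ↦ Subtype.ext <|
      eq_zero_of_linearIndepOn_col hK (fun x hx ↦ by simpa using c.2 x hx) hc
  refine ⟨LinearMap.toMatrix' (S.subtype ∘ₗ g), fun F hF ↦ ?_⟩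
  ext x i
  have hcol : F.col i ∈ S := fun x hx ↦ congrFun (hF x hx) i
  have hcomp : (g (α *ᵥ F.col i)).1 = F.col i :=
    congrArg Subtype.val (LinearMap.congr_fun hg ⟨F.col i, hcol⟩)
  calc (LinearMap.toMatrix' (S.subtype ∘ₗ g) * (α * F)) x i
    _ = (LinearMap.toMatrix' (S.subtype ∘ₗ g) *ᵥ (α *ᵥ F.col i)) x := rfl
    _ = F x i := by
      rw [LinearMap.toMatrix'_mulVec]
      exact congrFun hcomp x

theorem exists_skew_mul_transpose_eq {α : Matrix (Fin d) V ℝ} {K : Set V}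
    (hK : LinearIndepOn ℝ α.col K) {F : Matrix V (Fin d) ℝ} (hF : ∀ x ∉ K, F x = 0)
    (hskew : (α * F)ᵀ = -(α * F)) :
    ∃ B : Matrix V V ℝ, Bᵀ = -B ∧ (∀ x ∉ K, B x = 0) ∧ B * αᵀ = F := by
  obtain ⟨γ, hγ⟩ := exists_mul_mul_eq_of_linearIndepOn_col hK
  have hγF := hγ F hF
  refine ⟨γ * (α * F) * γᵀ, ?_, ?_, ?_⟩
  · rw [transpose_mul, transpose_mul, hskew, transpose_transpose, Matrix.neg_mul, Matrix.mul_neg,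
      Matrix.mul_assoc γ]
  · intro x hx
    rw [hγF, mul_apply_eq_vecMul, hF x hx, zero_vecMul]
  · calc γ * (α * F) * γᵀ * αᵀ
      _ = γ * (α * (γ * (α * F)ᵀ))ᵀ := by
        simp only [transpose_mul, transpose_transpose, Matrix.mul_assoc]
      _ = γ * (α * F) := by
        rw [hskew, Matrix.mul_neg, hγF, Matrix.mul_neg, transpose_neg, hskew, neg_neg, hγF]
      _ = F := hγF

theorem GenericallyStressFree.exists_common {G₁ G₂ : SimpleGraph V} {K : Set V}
    (h₁ : GenericallyStressFree G₁ d) (h₂ : GenericallyStressFree G₂ d) (hK : K.ncard ≤ d) :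
    ∃ α : Matrix (Fin d) V ℝ, IsStressFree G₁ α ∧ IsStressFree G₂ α ∧ LinearIndepOn ℝ α.col K := by
  obtain ⟨α, hα₁, hα₂, hαK⟩ := (h₁.dense.inter_of_isOpen_left
    (h₂.dense.inter_of_isOpen_left (dense_setOf_linearIndepOn_col hK)
      (isOpen_setOf_isStressFree G₂ d)) (isOpen_setOf_isStressFree G₁ d)).nonempty
  exact ⟨α, hα₁, hα₂, hαK⟩

theorem GenericallyStressFree.sup {G₁ G₂ : SimpleGraph V} {K : Set V}
    (h₁ : GenericallyStressFree G₁ d) (h₂ : GenericallyStressFree G₂ d) (hK₁ : G₁.IsClique K)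
    (hK₂ : G₂.IsClique K) (hK : K.ncard ≤ d) (hsupp : G₁.support ∩ G₂.support ⊆ K) :
    GenericallyStressFree (G₁ ⊔ G₂) d := by
  obtain ⟨α, hα₁, hα₂, hαK⟩ := h₁.exists_common h₂ hK
  refine ⟨α, fun A hA h ↦ ?_⟩
  obtain ⟨A₁, hA₁, A₂, hA₂, rfl⟩ := Submodule.mem_sup.1 (skewMatrices_sup_le G₁ G₂ hA)
  have hload : A₁ * αᵀ = -(A₂ * αᵀ) := by rwa [Matrix.add_mul, add_eq_zero_iff_eq_neg] at h
  have hloadK : ∀ x ∉ K, (A₁ * αᵀ) x = 0 := by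
    intro x hx
    by_cases hx₁ : x ∈ G₁.support
    · have hx₂ : x ∉ G₂.support := fun hx₂ ↦ hx (hsupp ⟨hx₁, hx₂⟩)
      exact (congrFun hload x).trans
        (neg_eq_zero.2 (mul_apply_eq_zero_of_notMem_support hA₂ hx₂ αᵀ))
    · exact mul_apply_eq_zero_of_notMem_support hA₁ hx₁ αᵀ
  -- `A₁` and `-A₂` carry the same load, and it lives on `K`; weights `B` on the clique resolve it.
  obtain ⟨B, hB, hBK, hBload⟩ := exists_skew_mul_transpose_eq hαK hloadK
    (transpose_mul_mul_transpose_of_mem_skewMatrices hA₁ α)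
  have hB₁ : A₁ - B = 0 := hα₁ _ (sub_mem hA₁ (mem_skewMatrices_of_isClique hK₁ hB hBK))
    (by rw [Matrix.sub_mul, hBload, sub_self])
  have hB₂ : B + A₂ = 0 := hα₂ _ (add_mem (mem_skewMatrices_of_isClique hK₂ hB hBK) hA₂)
    (by rw [Matrix.add_mul, hBload, hload, neg_add_cancel])
  rw [sub_eq_zero.1 hB₁, hB₂]

theorem IsStressFree.finrank_skewMatrices_le {α : Matrix (Fin d) V ℝ} (hα : IsStressFree G α) :
    Module.finrank ℝ (skewMatrices G) ≤ d * (Nat.card V - 1) := by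
  obtain rfl | hα₀ := eq_or_ne α 0
  · have hbot : skewMatrices G = ⊥ :=
      (Submodule.eq_bot_iff _).2 fun A hA ↦ hα A hA (by simp)
    rw [hbot, finrank_bot]
    exact Nat.zero_le _
  obtain ⟨x₀, hx₀⟩ : ∃ x₀, α.col x₀ ≠ 0 := by
    by_contra! hcol
    exact hα₀ (Matrix.ext fun i x ↦ congrFun (hcol x) i)
  let L : skewMatrices G →ₗ[ℝ] ({x₀}ᶜ : Set V) → Fin d → ℝ :=
    LinearMap.funLeft ℝ _ Subtype.val ∘ₗ stressMap G d α
  have hL : Function.Injective L := by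
    refine (injective_iff_map_eq_zero _).2 fun A hA ↦ Subtype.ext ?_
    -- By antisymmetry of `α * A * αᵀ`, a load supported at `x₀` alone vanishes.
    have hrows : ∀ x ∉ ({x₀} : Set V), (A.1 * αᵀ) x = 0 := fun x hx ↦ congrFun hA ⟨x, hx⟩
    obtain ⟨B, hB, hBK, hBload⟩ := exists_skew_mul_transpose_eq (LinearIndepOn.singleton hx₀) hrows
      (transpose_mul_mul_transpose_of_mem_skewMatrices A.2 α)
    have hB₀ := mem_skewMatrices_of_isClique (G := ⊥) (by simp) hB hBK
    have : B = 0 := Matrix.ext fun x y ↦ hB₀.2 x y not_false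
    exact hα _ A.2 (by rw [← hBload, this, Matrix.zero_mul])
  refine (LinearMap.finrank_le_finrank_of_injective hL).trans_eq ?_
  have := card_compl_singleton_add_one x₀
  rw [Nat.card_eq_fintype_card] at this
  simp only [Module.finrank_pi_fintype, Module.finrank_self, Fintype.card_fin, Finset.sum_const,
    Finset.card_univ, smul_eq_mul, mul_one]
  rw [← this, Nat.add_sub_cancel, mul_comm]

end StressOperations

section EdgeCoordinates

variable {V : Type*} {d : ℕ}

/-- The coordinates of an antisymmetric matrix supported on the edges of `G`: the edge `xy` with
`x < y` carries the entry at `(x, y)`. -/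
noncomputable def skewMatricesEquiv [LinearOrder V] (G : SimpleGraph V) :
    skewMatrices G ≃ₗ[ℝ] (G.edgeSet → ℝ) where
  toFun A e := A.1 e.1.inf e.1.sup
  map_add' _ _ := rfl
  map_smul' _ _ := rfl
  invFun w := ⟨Matrix.of fun x y ↦ if h : G.Adj x y then
      if x < y then w ⟨s(x, y), h⟩ else -w ⟨s(x, y), h⟩ else 0, by
    refine ⟨?_, fun x y h ↦ dif_neg h⟩
    ext x y
    by_cases h : G.Adj x y
    · obtain hxy | hxy := h.ne.lt_or_gt <;>
        simp [h, h.symm, hxy, hxy.not_gt, Sym2.eq_swap (a := y)]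
    · simp [h, mt G.adj_symm h]⟩
  left_inv A := by
    ext x y
    by_cases h : G.Adj x y
    · obtain hxy | hxy := h.ne.lt_or_gt
      · simp [h, hxy, hxy.le]
      · simp [h, hxy.not_gt, hxy.le, apply_eq_neg_of_mem_skewMatrices A.2 x y]
    · simp [h, A.2.2 x y h]
  right_inv w := by
    ext ⟨e, he⟩
    induction e with | _ x y
    have h : G.Adj x y := he
    obtain hxy | hxy := h.ne.lt_or_gt
    · simp [h, hxy, hxy.le]
    · simp [h.symm, hxy, hxy.le, Sym2.eq_swap (a := y)]

theorem finrank_skewMatrices [Finite V] (G : SimpleGraph V) :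
    Module.finrank ℝ (skewMatrices G) = G.edgeSet.ncard := by
  have := Fintype.ofFinite V
  let _ : LinearOrder V := LinearOrder.lift' (Fintype.equivFin V) (Equiv.injective _)
  rw [(skewMatricesEquiv G).finrank_eq, Module.finrank_fintype_fun_eq_card,
    ← Nat.card_eq_fintype_card, Nat.card_coe_set_eq]

variable [Fintype V] {G : SimpleGraph V}

theorem GenericallyStressFree.ncard_edgeSet_le (h : GenericallyStressFree G d) :
    G.edgeSet.ncard ≤ d * (Nat.card V - 1) := by
  obtain ⟨α, hα⟩ := h
  exact (finrank_skewMatrices G).symm.trans_le hα.finrank_skewMatrices_le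

variable [LinearOrder V]

theorem rigMap_skewMatricesEquiv (α : Matrix (Fin d) V ℝ) (A : skewMatrices G) (i : Fin d) (x : V) :
    rigMap G d α (skewMatricesEquiv G A) (i, x) = stressMap G d α A x i := by
  change _ - _ = ∑ y, A.1 x y * α i y
  rw [← Finset.sum_sub_distrib]
  refine Finset.sum_congr rfl fun y _ ↦ ?_
  by_cases h : G.Adj x y
  · have hw : skewMatricesEquiv G A ⟨s(x, y), h⟩ = A.1 (x ⊓ y) (x ⊔ y) := rfl
    obtain hxy | hxy := h.ne.lt_or_gt
    · simp [h, hw, hxy, hxy.le, hxy.not_gt]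
    · simp [h, hw, hxy, hxy.le, hxy.not_gt, apply_eq_neg_of_mem_skewMatrices A.2 x y]
  · simp [h, A.2.2 x y h]

theorem injective_rigMap_iff {α : Matrix (Fin d) V ℝ} :
    Function.Injective (rigMap G d α) ↔ IsStressFree G α := by
  rw [isStressFree_iff_injective, ← (skewMatricesEquiv G).injective_comp]
  let e : Matrix V (Fin d) ℝ ≃ (Fin d × V → ℝ) := (Equiv.curry _ _ _).symm.trans
    ((Equiv.prodComm _ _).arrowCongr (.refl _))
  rw [← e.comp_injective (stressMap G d α)]
  refine iff_of_eq (congrArg _ (funext fun A ↦ funext fun p ↦ ?_))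
  exact rigMap_skewMatricesEquiv α A p.1 p.2

theorem GenericallyStressFree.dAcyclic (h : GenericallyStressFree G d) : DAcyclic G d := by
  have hset : {α : Fin d → V → ℝ | Function.Injective (rigMap G d α)} =
      {α : Matrix (Fin d) V ℝ | IsStressFree G α} := Set.ext fun _ ↦ injective_rigMap_iff
  rw [DAcyclic, hset]
  exact ⟨isOpen_setOf_isStressFree G d, h.dense⟩

end EdgeCoordinates

section CliqueSeparation

variable {V : Type*} {G : SimpleGraph V} {d : ℕ} {s t : Set V}

theorem spanningCoe_induce_adj {x y : V} :
    (G.induce s).spanningCoe.Adj x y ↔ G.Adj x y ∧ x ∈ s ∧ y ∈ s := by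
  rw [map_adj]
  constructor
  · rintro ⟨x, y, hxy, rfl, rfl⟩
    exact ⟨hxy, x.2, y.2⟩
  · rintro ⟨hxy, hx, hy⟩
    exact ⟨⟨x, hx⟩, ⟨y, hy⟩, hxy, rfl, rfl⟩

variable [Fintype V]

theorem GenericallyStressFree.of_induce (h : GenericallyStressFree (G.induce s) d)
    (hs : G.support ⊆ s) : GenericallyStressFree G d :=
  (G.spanningCoe_induce_eq_self s).2 hs ▸ h.map (.subtype (· ∈ s))

theorem GenericallyStressFree.of_induce_of_induce (hs : GenericallyStressFree (G.induce s) d)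
    (ht : GenericallyStressFree (G.induce t) d) (hst : G.IsClique (s ∩ t))
    (hcard : (s ∩ t).ncard ≤ d) (hadj : ∀ x y, G.Adj x y → x ∈ s ∧ y ∈ s ∨ x ∈ t ∧ y ∈ t) :
    GenericallyStressFree G d := by
  have hsup : (G.induce s).spanningCoe ⊔ (G.induce t).spanningCoe = G := by
    ext x y
    rw [sup_adj, spanningCoe_induce_adj, spanningCoe_induce_adj, ← and_or_left,
      and_iff_left_iff_imp]
    exact hadj x y
  rw [← hsup]
  refine (hs.map (.subtype (· ∈ s))).sup (ht.map (.subtype (· ∈ t))) (K := s ∩ t) ?_ ?_ hcard ?_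
  · exact fun x hx y hy hxy ↦ spanningCoe_induce_adj.2 ⟨hst hx hy hxy, hx.1, hy.1⟩
  · exact fun x hx y hy hxy ↦ spanningCoe_induce_adj.2 ⟨hst hx hy hxy, hx.2, hy.2⟩
  · rintro x ⟨⟨y, hy⟩, z, hz⟩
    exact ⟨(spanningCoe_induce_adj.1 hy).2.1, (spanningCoe_induce_adj.1 hz).2.1⟩

end CliqueSeparation

theorem hasMinor_top_of_le_one {V : Type*} {G : SimpleGraph V} {k : ℕ}
    (hk : k ≤ 1) {u v : V} (huv : G.Adj u v) (hcm : k ≤ (G.commonNeighbors u v).ncard) :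
    HasMinor G (⊤ : SimpleGraph (Fin (k + 2))) := by
  interval_cases k
  · exact .top_of_isClique (s := {u, v}) (by simpa using fun _ ↦ huv) (by simp [huv.ne])
  · obtain ⟨w, hw⟩ := Set.nonempty_of_ncard_ne_zero (Nat.one_le_iff_ne_zero.1 hcm)
    have h := is3Clique_triple_iff.2 ⟨huv, hw.1, hw.2⟩
    exact .top_of_isClique h.isClique h.card_eq.ge

section MainInduction

variable {V : Type u} {G : SimpleGraph V} {k : ℕ}

theorem card_add_ncard_edgeSet_induce_lt [Finite V] {s : Set V} (hs : s ≠ .univ) :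
    Nat.card s + (G.induce s).edgeSet.ncard < Nat.card V + G.edgeSet.ncard := by
  refine add_lt_add_of_lt_of_le ?_ ?_
  · rw [Nat.card_coe_set_eq, ← Set.ncard_univ]
    exact Set.ncard_lt_ncard hs.lt_top
  · refine Set.ncard_le_ncard_of_injOn (Sym2.map Subtype.val) ?_
      (Sym2.map.injective Subtype.val_injective).injOn
    rintro ⟨x, y⟩ h
    exact h

theorem exists_clique_separation [Finite V] (hk : 2 ≤ k) (hk4 : k ≤ 4)
    (hfree : ¬ HasMinor G (⊤ : SimpleGraph (Fin (k + 2))))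
    (hcm : ∀ x y, G.Adj x y → k ≤ (G.commonNeighbors x y).ncard)
    (hiso : ∀ v, (G.neighborSet v).Nonempty) (hE : G.edgeSet.ncard < k * Nat.card V) :
    ∃ s t : Set V, s ≠ .univ ∧ t ≠ .univ ∧ G.IsClique (s ∩ t) ∧ (s ∩ t).ncard ≤ k ∧
      ∀ x y, G.Adj x y → x ∈ s ∧ y ∈ s ∨ x ∈ t ∧ y ∈ t := by
  interval_cases k
  · exact (hfree (smallLinkCondition_two.hasMinor_of_le_commonNeighbors hiso hE hcm)).elim
  · exact (hfree (smallLinkCondition_three.hasMinor_of_le_commonNeighbors hiso hE hcm)).elim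
  obtain ⟨v, hv⟩ := exists_ncard_neighborSet_lt (G := G) (c := 8) (by omega)
  obtain ⟨C, K, ⟨c, hc⟩, hvC, hvK, hK, hcard, hclosed⟩ :=
    exists_separating_clique hfree hcm (hiso v) (Nat.le_of_lt_succ hv)
  have hsub : (C ∪ K) ∩ Cᶜ ⊆ K := fun x hx ↦ hx.1.resolve_left hx.2
  refine ⟨C ∪ K, Cᶜ, ?_, ?_, hK.subset hsub, (Set.ncard_le_ncard hsub).trans hcard,
    fun x y hxy ↦ ?_⟩
  · exact (Set.ne_univ_iff_exists_notMem _).2 ⟨v, not_or_intro hvC hvK⟩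
  · exact (Set.ne_univ_iff_exists_notMem _).2 ⟨c, not_not_intro hc⟩
  · by_cases hx : x ∈ C
    · exact .inl ⟨.inl hx, hclosed x hx y hxy⟩
    by_cases hy : y ∈ C
    · exact .inl ⟨hclosed y hy x hxy.symm, .inl hy⟩
    · exact .inr ⟨hx, hy⟩

variable [Fintype V]

theorem ncard_edgeSet_lt_of_deleteEdges {e : Sym2 V} (he : e ∈ G.edgeSet)
    (h : GenericallyStressFree (G.deleteEdges {e}) k) (hk : 2 ≤ k) :
    G.edgeSet.ncard < k * Nat.card V := by
  have := ncard_edgeSet_deleteEdges_singleton he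
  have hE := h.ncard_edgeSet_le
  have : Nonempty V := ⟨e.out.1⟩
  obtain ⟨n, hn⟩ := Nat.exists_eq_add_one.2 (Nat.card_pos (α := V))
  rw [hn, Nat.add_sub_cancel] at hE
  rw [hn, mul_add_one]
  omega

theorem genericallyStressFree_of_not_hasMinor_top (hk : k ≤ 4)
    (hfree : ¬ HasMinor G (⊤ : SimpleGraph (Fin (k + 2)))) : GenericallyStressFree G k := by
  induction hm : Nat.card V + G.edgeSet.ncard using Nat.strong_induction_on generalizing V with
  | _ m ih
  subst hm
  have of_proper {s : Set V} (hs : s ≠ .univ) : GenericallyStressFree (G.induce s) k :=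
    ih _ (card_add_ncard_edgeSet_induce_lt hs) (fun h ↦ hfree h.of_induce) rfl
  obtain hempty | ⟨e, he⟩ := G.edgeSet.eq_empty_or_nonempty
  · rw [edgeSet_eq_empty.1 hempty]
    exact genericallyStressFree_bot
  by_cases hcm : ∀ u v, G.Adj u v → k ≤ (G.commonNeighbors u v).ncard
  · have hk2 : 2 ≤ k := by
      by_contra! hk1
      induction e with | _ u v
      exact hfree (hasMinor_top_of_le_one (Nat.le_of_lt_succ hk1) he (hcm u v he))
    by_cases hiso : ∀ v, (G.neighborSet v).Nonempty
    · have hdel : GenericallyStressFree (G.deleteEdges {e}) k :=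
        ih _ (by have := ncard_edgeSet_deleteEdges_singleton he; omega)
          (fun h ↦ hfree (h.of_le (G.deleteEdges_le {e}))) rfl
      obtain ⟨s, t, hs, ht, hst, hcard, hadj⟩ := exists_clique_separation hk2 hk hfree hcm hiso
        (ncard_edgeSet_lt_of_deleteEdges he hdel hk2)
      exact (of_proper hs).of_induce_of_induce (of_proper ht) hst hcard hadj
    · push Not at hiso
      obtain ⟨v, hv⟩ := hiso
      refine (of_proper (s := {v}ᶜ) (by simp)).of_induce ?_
      rintro x ⟨y, hxy⟩ rfl
      exact (hv ▸ hxy : y ∈ (∅ : Set V))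
  · push Not at hcm
    obtain ⟨u, v, huv, hlt⟩ := hcm
    have := ncard_edgeSet_contract huv
    have := card_compl_singleton_add_one v
    exact genericallyStressFree_of_contract huv
      (ih _ (by omega) (fun h ↦ hfree ((HasMinor.contract huv).trans h)) rfl) hlt

end MainInduction

theorem krMinorFree_dAcyclic_general {V : Type*} [Fintype V] [LinearOrder V] (G : SimpleGraph V)
    {k : ℕ} (hk : k ≤ 4) (hfree : ¬ HasMinor G (⊤ : SimpleGraph (Fin (k + 2)))) : DAcyclic G k :=
  (genericallyStressFree_of_not_hasMinor_top hk hfree).dAcyclic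

/-- For `2 ≤ r ≤ 6`, every finite simple graph (with linearly ordered vertex set)
having no `K_r` minor is `(r-2)`-acyclic; equivalently, if `{r-1, r}` is a face of
the exterior algebraic shifting `Δᵉ(G)`, then `G` has a `K_r` minor. -/
theorem krMinorFree_dAcyclic {n : ℕ} (G : SimpleGraph (Fin n))
    (r : ℕ) (hr2 : 2 ≤ r) (hr6 : r ≤ 6)
    (hfree : ¬ HasMinor G (⊤ : SimpleGraph (Fin r))) :
    DAcyclic G (r - 2) := by
  obtain ⟨k, rfl⟩ := Nat.exists_eq_add_of_le' hr2
  exact krMinorFree_dAcyclic_general G (by omega) hfree
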